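/- Let $s\ge 2$ and $d\ge 1$ be integers and let $f$ be a homogeneous polynomial of degree $s$ in $d$ variables with rational coefficients such that the set $\{x\in\mathbb{Q}^d : f(x)=0\}$ is finite. Let $|\cdot|$ denote the Euclidean norm on $\mathbb{R}^d$, let $D$ be the least common denominator of the coefficients of $f$, and let $K=\sup\{|f(x)| : x\in\mathbb{R}^d,\ |x|=1\}$. Let $\xi\in\mathbb{R}^d\setminus\mathbb{Q}^d$ satisfy $f(\xi)=1$, and for real $T$ put $$\Psi_{f,\xi}(T)=\min\left\{\frac{|q\xi-a|^s}{q} \;:\; q\in\mathbb{Z},\ a=(a_1,\dots,a_d)\in\mathbb{Z}^d,\ 1\le q\le T,\ f\left(\frac{a_1}{q},\dots,\frac{a_d}{q}\right)=1\right\},$$ where the minimum over the empty set is $+\infty$. Then for every $\varepsilon>0$ there exist arbitrarily large real $T$ such that $$T^{s-1}\cdot\Psi_{f,\xi}(T)\ \ge\ \frac{1}{2^sDK}-\varepsilon .$$ -/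

import Mathlib

/-- `D(f)`: the least common denominator of the coefficients of `f`. -/
def coeffDenom {d : ℕ} (f : MvPolynomial (Fin d) ℚ) : ℕ :=
  f.support.lcm fun m => (f.coeff m).den

/-- `K(f)`: the supremum of `|f(x)|` over the Euclidean unit sphere of `ℝ^d`. -/
noncomputable def sphereSup {d : ℕ} (f : MvPolynomial (Fin d) ℚ) : ℝ :=
  sSup ((fun x : EuclideanSpace ℝ (Fin d) => |MvPolynomial.aeval (fun i => x i) f|) ''
    Metric.sphere 0 1)

/-- `Ψ_{f,ξ}(T)`: the minimum of `|qξ - a|^s / q` over the integer vectors `(q, a₁, …, a_d)`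
with `1 ≤ q ≤ T` and `f(a₁/q, …, a_d/q) = 1`, where `|·|` is the Euclidean norm and `s` is the
degree of `f`. It takes values in the extended reals, because there may be no such vector, in which
case the minimum is `+∞`. -/
noncomputable def PsiSurface {d : ℕ} (f : MvPolynomial (Fin d) ℚ) (s : ℕ)
    (ξ : EuclideanSpace ℝ (Fin d)) (T : ℝ) : EReal :=
  sInf {v : EReal | ∃ (q : ℤ) (a : Fin d → ℤ),
    1 ≤ q ∧ (q : ℝ) ≤ T ∧
    MvPolynomial.eval (fun i => (a i : ℚ) / (q : ℚ)) f = 1 ∧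
    v = ((‖(q : ℝ) • ξ - WithLp.toLp 2 (fun i => (a i : ℝ))‖ ^ s / (q : ℝ) : ℝ) : EReal)}

/-!
Let `(q, a)` and `(q', a')` represent two different rational points of the hypersurface `f = 1`,
and let `F = D(f) f`, which has integer coefficients. Both `F(q' a)` and `F(q a')` are equal to
`D(f) (q q') ^ s`, and the mixed terms of `F(q' a - q a')` are divisible by `q q'`, so `q q'`
divides `F(q' a - q a')`, which is nonzero because `f` has no nontrivial rational zero. Hence
`q q' ≤ D(f) K(f) |q' a - q a'| ^ s`.

Now let `(q, a)` minimise `|q ξ - a| ^ s / q` among the points of height at most some `T₁`, and let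
`(q', a')` be a point of least height at which this value is improved. The improvement forces
`q |q' ξ - a'| < q' |q ξ - a|`, so `|q' a - q a'| < 2 q' |q ξ - a|`, and the separation above
becomes `q' ^ (s - 1) |q ξ - a| ^ s / q > 1 / (2 ^ s D(f) K(f))`. Below height `q'` the minimum is
still the one attained at `(q, a)`, so every `T < q'` close enough to `q'` does what is wanted.
Because the inequality is strict, passing from `q'` to `T` costs no `ε`.
-/

open Filter MvPolynomial

theorem eval_smul_of_isHomogeneous {σ R : Type*} [CommSemiring R] {f : MvPolynomial σ R} {s : ℕ}
    (hf : f.IsHomogeneous s) (t : R) (x : σ → R) : eval (t • x) f = t ^ s * eval x f := by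
  simp only [eval_eq, Finset.mul_sum]
  refine Finset.sum_congr rfl fun m hm => ?_
  have hdeg : ∑ i ∈ m.support, m i = s := (hf.degree_eq_sum_deg_support hm).symm
  simp only [Pi.smul_apply, smul_eq_mul, mul_pow, Finset.prod_mul_distrib,
    Finset.prod_pow_eq_pow_sum, hdeg]
  ring

theorem eval_ne_zero_of_isHomogeneous_of_finite_zeros {σ k : Type*} [CommRing k] [IsDomain k]
    [Infinite k] {f : MvPolynomial σ k} {s : ℕ} (hf : f.IsHomogeneous s)
    (hfin : {x : σ → k | eval x f = 0}.Finite) {x : σ → k} (hx : x ≠ 0) : eval x f ≠ 0 := by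
  intro h0
  refine Set.infinite_range_of_injective (smul_left_injective k hx) (hfin.subset ?_)
  rintro _ ⟨t, rfl⟩
  simp [eval_smul_of_isHomogeneous hf, h0]

section MixedDifference

variable {σ R : Type*} [CommRing R]

theorem dvd_eval_smul_sub_eval_zero (g : MvPolynomial σ R) (α : R) (a : σ → R) :
    α ∣ eval (α • a) g - eval 0 g := by
  induction g using MvPolynomial.induction_on with
  | C r => simp
  | add p q hp hq => simpa [add_sub_add_comm] using dvd_add hp hq
  | mul_X p i _ => simp [mul_left_comm]

theorem mul_dvd_eval_mixed_difference (g : MvPolynomial σ R) (α β : R) (a b : σ → R) :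
    α * β ∣ eval (α • a + β • b) g - eval (α • a) g - eval (β • b) g + eval 0 g := by
  induction g using MvPolynomial.induction_on with
  | C r => simp
  | add p q hp hq =>
    convert dvd_add hp hq using 1
    simp only [map_add]
    ring
  | mul_X p i hp =>
    obtain ⟨u, hu⟩ := dvd_eval_smul_sub_eval_zero p α a
    obtain ⟨v, hv⟩ := dvd_eval_smul_sub_eval_zero p β b
    obtain ⟨w, hw⟩ := hp
    refine ⟨a i * (v + α * w) + b i * (u + β * w), ?_⟩
    simp only [map_mul, eval_X, Pi.add_apply, Pi.smul_apply, Pi.zero_apply, smul_eq_mul]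
    linear_combination (α * a i + β * b i) * hw + α * a i * hv + β * b i * hu

theorem mul_dvd_eval_smul_sub_smul {g : MvPolynomial σ R} {s : ℕ}
    (hs : s ≠ 0) (hg : g.IsHomogeneous s) {q q' : R} {a a' : σ → R} (h : q ∣ eval a g)
    (h' : q' ∣ eval a' g) : q * q' ∣ eval (q' • a - q • a') g := by
  have hmix := mul_dvd_eval_mixed_difference g q' (-q) a a'
  have h_zero : eval 0 g = 0 := by simpa [hs] using eval_smul_of_isHomogeneous hg 0 0
  have h_left : q * q' ∣ eval (q' • a) g := by
    rw [eval_smul_of_isHomogeneous hg, mul_comm q]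
    exact mul_dvd_mul (dvd_pow_self q' hs) h
  have h_right : q * q' ∣ eval (-q • a') g := by
    rw [eval_smul_of_isHomogeneous hg]
    exact mul_dvd_mul ((dvd_neg.mpr dvd_rfl).trans (dvd_pow_self (-q) hs)) h'
  rw [mul_neg, neg_dvd, mul_comm, h_zero, add_zero, sub_sub,
    dvd_sub_left (dvd_add h_left h_right), neg_smul, ← sub_eq_add_neg] at hmix
  exact hmix

end MixedDifference

theorem intCast_eval_eq_mul_aeval {σ A : Type*} [CommRing A] [Algebra ℚ A] {n : ℕ}
    {g : MvPolynomial σ ℤ} {f : MvPolynomial σ ℚ}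
    (hg : map (algebraMap ℤ ℚ) g = (n : ℚ) • f) (z : σ → ℤ) :
    ((eval z g : ℤ) : A) = n * aeval (fun i => (z i : A)) f := by
  calc ((eval z g : ℤ) : A) = aeval (fun i => (z i : A)) g := by
        simpa [Function.comp_def] using (aeval_algebraMap_apply A z g).symm
    _ = aeval (fun i => (z i : A)) (map (algebraMap ℤ ℚ) g) := (aeval_map_algebraMap ℚ _ g).symm
    _ = n * aeval (fun i => (z i : A)) f := by rw [hg]; simp [Algebra.smul_def]

section DenominatorAndSup

variable {d : ℕ}

theorem coeffDenom_pos (f : MvPolynomial (Fin d) ℚ) : 0 < coeffDenom f := by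
  refine Nat.pos_of_ne_zero fun h => ?_
  obtain ⟨m, -, hm⟩ := Finset.lcm_eq_zero_iff.mp h
  exact (f.coeff m).den_nz hm

theorem exists_map_eq_coeffDenom_smul (f : MvPolynomial (Fin d) ℚ) :
    ∃ g : MvPolynomial (Fin d) ℤ, map (algebraMap ℤ ℚ) g = (coeffDenom f : ℚ) • f := by
  rw [← Set.mem_range, mem_range_map_iff_coeffs_subset]
  intro c hc
  obtain ⟨m, hm, rfl⟩ := mem_coeffs_iff.mp (Finset.mem_coe.mp hc)
  obtain ⟨k, hk⟩ : (f.coeff m).den ∣ coeffDenom f := Finset.dvd_lcm (support_smul hm)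
  refine ⟨k * (f.coeff m).num, ?_⟩
  simp only [coeff_smul, hk, smul_eq_mul, algebraMap_int_eq, eq_intCast, Int.cast_mul,
    Int.cast_natCast, Nat.cast_mul]
  rw [mul_comm ((f.coeff m).den : ℚ), mul_assoc, Rat.den_mul_eq_num]

theorem abs_aeval_le_sphereSup_mul_norm_pow {s : ℕ} (hs : s ≠ 0) {f : MvPolynomial (Fin d) ℚ}
    (hf : f.IsHomogeneous s) (x : EuclideanSpace ℝ (Fin d)) :
    |aeval (fun i => x i) f| ≤ sphereSup f * ‖x‖ ^ s := by
  have haeval (y : Fin d → ℝ) : aeval y f = eval y (map (algebraMap ℚ ℝ) f) :=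
    eval₂_eq_eval_map ..
  have hscale (t : ℝ) (y : EuclideanSpace ℝ (Fin d)) :
      aeval (fun i => (t • y) i) f = t ^ s * aeval (fun i => y i) f := by
    simp only [haeval]
    exact eval_smul_of_isHomogeneous (hf.map _) t _
  rcases eq_or_ne x 0 with rfl | hx
  · simpa [hs] using hscale 0 0
  have hcont : Continuous fun y : EuclideanSpace ℝ (Fin d) => |aeval (fun i => y i) f| := by
    simp only [haeval]
    exact ((continuous_eval _).comp (by fun_prop)).abs
  have hunit : |aeval (fun i => (‖x‖⁻¹ • x) i) f| ≤ sphereSup f :=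
    le_csSup ((isCompact_sphere 0 1).image hcont).bddAbove
      ⟨‖x‖⁻¹ • x, by simp [norm_smul, hx], rfl⟩
  calc |aeval (fun i => x i) f| = |aeval (fun i => (‖x‖ • ‖x‖⁻¹ • x) i) f| := by
        rw [smul_inv_smul₀ (norm_ne_zero_iff.mpr hx)]
    _ = |aeval (fun i => (‖x‖⁻¹ • x) i) f| * ‖x‖ ^ s := by
        rw [hscale, abs_mul, abs_pow, abs_norm, mul_comm]
    _ ≤ sphereSup f * ‖x‖ ^ s := by gcongr

end DenominatorAndSup

section SurfaceVectors

variable {d s : ℕ} {f : MvPolynomial (Fin d) ℚ}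

/-- The integer vectors `(q, a)` with `q ≥ 1` that represent a rational point `a / q` of the
hypersurface `f = 1`; `a / q` is not required to be in lowest terms. -/
def surfaceVectors (f : MvPolynomial (Fin d) ℚ) : Set (ℤ × (Fin d → ℤ)) :=
  {p | 1 ≤ p.1 ∧ eval (fun i => (p.2 i : ℚ) / (p.1 : ℚ)) f = 1}

theorem eval_snd_of_mem_surfaceVectors (hf : f.IsHomogeneous s) {p : ℤ × (Fin d → ℤ)}
    (hp : p ∈ surfaceVectors f) : eval (fun i => (p.2 i : ℚ)) f = (p.1 : ℚ) ^ s := by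
  have hne : (p.1 : ℚ) ≠ 0 := Int.cast_ne_zero.mpr (zero_lt_one.trans_le hp.1).ne'
  have hvec : (fun i => (p.2 i : ℚ)) = (p.1 : ℚ) • fun i => (p.2 i : ℚ) / p.1 := by
    ext i
    simp [mul_div_cancel₀ _ hne]
  rw [hvec, eval_smul_of_isHomogeneous hf, hp.2, mul_one]

theorem mul_le_coeffDenom_mul_sphereSup_mul_norm_pow (hs : s ≠ 0) (hf : f.IsHomogeneous s)
    (hani : ∀ x : Fin d → ℚ, x ≠ 0 → eval x f ≠ 0) {p p' : ℤ × (Fin d → ℤ)}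
    (hp : p ∈ surfaceVectors f) (hp' : p' ∈ surfaceVectors f)
    (hne : p'.1 • p.2 - p.1 • p'.2 ≠ 0) :
    (p.1 * p'.1 : ℝ) ≤ coeffDenom f * sphereSup f *
      ‖WithLp.toLp 2 (fun i => (((p'.1 • p.2 - p.1 • p'.2) i : ℤ) : ℝ))‖ ^ s := by
  obtain ⟨g, hg⟩ := exists_map_eq_coeffDenom_smul f
  have hg_hom : g.IsHomogeneous s :=
    IsHomogeneous.of_map (RingHom.injective_int _)
      (hg ▸ (homogeneousSubmodule (Fin d) ℚ s).smul_mem _ hf)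
  have hdvd {r : ℤ × (Fin d → ℤ)} (hr : r ∈ surfaceVectors f) : r.1 ∣ eval r.2 g := by
    have h : ((eval r.2 g : ℤ) : ℚ) = coeffDenom f * (r.1 : ℚ) ^ s :=
      eval_snd_of_mem_surfaceVectors hf hr ▸ intCast_eval_eq_mul_aeval hg r.2
    have h' : eval r.2 g = coeffDenom f * r.1 ^ s := by exact_mod_cast h
    exact h' ▸ (dvd_pow_self r.1 hs).mul_left _
  set z := p'.1 • p.2 - p.1 • p'.2
  have hz_dvd : p.1 * p'.1 ∣ eval z g := mul_dvd_eval_smul_sub_smul hs hg_hom (hdvd hp) (hdvd hp')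
  have hz_ne : eval z g ≠ 0 := by
    rw [← Int.cast_ne_zero (α := ℚ), intCast_eval_eq_mul_aeval hg]
    refine mul_ne_zero (Nat.cast_ne_zero.mpr (coeffDenom_pos f).ne') (hani _ fun h => hne ?_)
    exact funext fun i => Int.cast_eq_zero.mp (congrFun h i)
  have hle : p.1 * p'.1 ≤ |eval z g| :=
    Int.le_of_dvd (abs_pos.mpr hz_ne) ((dvd_abs _ _).mpr hz_dvd)
  calc (p.1 * p'.1 : ℝ) ≤ |((eval z g : ℤ) : ℝ)| := by exact_mod_cast hle
    _ = coeffDenom f * |aeval (fun i => (z i : ℝ)) f| := by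
        rw [intCast_eval_eq_mul_aeval hg, abs_mul, Nat.abs_cast]
    _ ≤ coeffDenom f * (sphereSup f * ‖WithLp.toLp 2 (fun i => (z i : ℝ))‖ ^ s) := by
        gcongr
        exact abs_aeval_le_sphereSup_mul_norm_pow hs hf (WithLp.toLp 2 fun i => (z i : ℝ))
    _ = _ := (mul_assoc ..).symm

end SurfaceVectors

section Weight

variable {d s : ℕ}

/-- The vector `q ξ - a`, for `p = (q, a)`. -/
noncomputable def approxResidual (ξ : EuclideanSpace ℝ (Fin d)) (p : ℤ × (Fin d → ℤ)) :
    EuclideanSpace ℝ (Fin d) :=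
  (p.1 : ℝ) • ξ - WithLp.toLp 2 (fun i => (p.2 i : ℝ))

/-- The quantity `|q ξ - a| ^ s / q` that `PsiSurface` minimises, for `p = (q, a)`. -/
noncomputable def approxWeight (s : ℕ) (ξ : EuclideanSpace ℝ (Fin d)) (p : ℤ × (Fin d → ℤ)) : ℝ :=
  ‖approxResidual ξ p‖ ^ s / p.1

theorem toLp_smul_sub_smul (ξ : EuclideanSpace ℝ (Fin d)) (p p' : ℤ × (Fin d → ℤ)) :
    WithLp.toLp 2 (fun i => (((p'.1 • p.2 - p.1 • p'.2) i : ℤ) : ℝ)) =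
      (p.1 : ℝ) • approxResidual ξ p' - (p'.1 : ℝ) • approxResidual ξ p := by
  ext i
  simp only [approxResidual, zsmul_eq_mul, Pi.sub_apply, Pi.mul_apply, Pi.intCast_apply,
    Int.cast_eq, Int.cast_sub, Int.cast_mul, PiLp.sub_apply, PiLp.smul_apply, smul_eq_mul]
  ring

theorem approxResidual_ne_zero {ξ : EuclideanSpace ℝ (Fin d)}
    (hirr : ¬ ∃ x : Fin d → ℚ, ∀ i, (x i : ℝ) = ξ i) {p : ℤ × (Fin d → ℤ)} (hp : p.1 ≠ 0) :
    approxResidual ξ p ≠ 0 := by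
  refine fun h => hirr ⟨fun i => p.2 i / p.1, fun i => ?_⟩
  have hi : p.1 * ξ i = p.2 i := by
    simpa [approxResidual, sub_eq_zero] using congrArg (fun v : EuclideanSpace ℝ (Fin d) => v i) h
  push_cast
  rw [← hi, mul_div_cancel_left₀ _ (Int.cast_ne_zero.mpr hp)]

theorem approxWeight_pos {ξ : EuclideanSpace ℝ (Fin d)}
    (hirr : ¬ ∃ x : Fin d → ℚ, ∀ i, (x i : ℝ) = ξ i) {p : ℤ × (Fin d → ℤ)} (hp : 0 < p.1) :
    0 < approxWeight s ξ p :=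
  div_pos (pow_pos (norm_pos_iff.mpr (approxResidual_ne_zero hirr hp.ne')) s) (Int.cast_pos.mpr hp)

theorem finite_norm_approxResidual_le (ξ : EuclideanSpace ℝ (Fin d)) (T B : ℝ) :
    {p : ℤ × (Fin d → ℤ) | |(p.1 : ℝ)| ≤ T ∧ ‖approxResidual ξ p‖ ≤ B}.Finite := by
  refine (isCompact_closedBall 0 (max T (T * ‖ξ‖ + B))).finite_of_discrete.subset ?_
  rintro p ⟨hT, hB⟩
  have : 0 ≤ T := (abs_nonneg _).trans hT
  have hnorm : ‖WithLp.toLp 2 (fun i => (p.2 i : ℝ))‖ ≤ T * ‖ξ‖ + B :=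
    calc ‖WithLp.toLp 2 (fun i => (p.2 i : ℝ))‖ = ‖(p.1 : ℝ) • ξ - approxResidual ξ p‖ := by
          simp [approxResidual]
      _ ≤ |(p.1 : ℝ)| * ‖ξ‖ + ‖approxResidual ξ p‖ :=
          (norm_sub_le _ _).trans_eq (by rw [norm_smul, Real.norm_eq_abs])
      _ ≤ T * ‖ξ‖ + B := by gcongr
  have hcoord (i : Fin d) : ‖p.2 i‖ ≤ T * ‖ξ‖ + B :=
    (PiLp.norm_apply_le (WithLp.toLp 2 fun i => (p.2 i : ℝ)) i).trans hnorm
  rw [mem_closedBall_zero_iff, Prod.norm_def]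
  exact max_le_max hT ((pi_norm_le_iff_of_nonneg ((norm_nonneg _).trans hnorm)).mpr hcoord)

theorem finite_approxWeight_le (hs : s ≠ 0) (ξ : EuclideanSpace ℝ (Fin d)) (T B : ℝ) :
    {p : ℤ × (Fin d → ℤ) | 0 < p.1 ∧ (p.1 : ℝ) ≤ T ∧ approxWeight s ξ p ≤ B}.Finite := by
  refine (finite_norm_approxResidual_le ξ T (max 1 (B * T))).subset ?_
  rintro p ⟨hp, hT, hB⟩
  have hp' : (0 : ℝ) < p.1 := Int.cast_pos.mpr hp
  refine ⟨by rwa [abs_of_pos hp'], ?_⟩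
  rcases le_total ‖approxResidual ξ p‖ 1 with h | h
  · exact h.trans (le_max_left _ _)
  · have hB0 : 0 ≤ B := (by unfold approxWeight; positivity : 0 ≤ approxWeight s ξ p).trans hB
    calc ‖approxResidual ξ p‖ ≤ ‖approxResidual ξ p‖ ^ s := le_self_pow₀ h hs
      _ ≤ B * p.1 := (div_le_iff₀ hp').mp hB
      _ ≤ B * T := by gcongr
      _ ≤ max 1 (B * T) := le_max_right _ _

theorem le_mul_PsiSurface {f : MvPolynomial (Fin d) ℚ} {ξ : EuclideanSpace ℝ (Fin d)} {T r c : ℝ}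
    (hr : 0 < r)
    (h : ∀ p ∈ surfaceVectors f, (p.1 : ℝ) ≤ T → c ≤ r * approxWeight s ξ p) :
    (c : EReal) ≤ (r : EReal) * PsiSurface f s ξ T := by
  have hr' : (0 : EReal) < r := EReal.coe_pos.mpr hr
  rw [← EReal.div_le_iff_le_mul hr' (EReal.coe_ne_top r)]
  refine le_sInf ?_
  rintro _ ⟨q, a, hq, hqT, hqa, rfl⟩
  rw [EReal.div_le_iff_le_mul hr' (EReal.coe_ne_top r), ← EReal.coe_mul]
  exact EReal.coe_le_coe_iff.mpr (h (q, a) ⟨hq, hqa⟩ hqT)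

theorem fst_mul_norm_approxResidual_lt (hs : s ≠ 0) {ξ : EuclideanSpace ℝ (Fin d)}
    {p p' : ℤ × (Fin d → ℤ)} (hp : 0 < p.1) (hle : p.1 ≤ p'.1)
    (hw : approxWeight s ξ p' < approxWeight s ξ p) :
    p.1 * ‖approxResidual ξ p'‖ < p'.1 * ‖approxResidual ξ p‖ := by
  obtain ⟨n, rfl⟩ := Nat.exists_eq_succ_of_ne_zero hs
  have hq : (0 : ℝ) < p.1 := Int.cast_pos.mpr hp
  have hqq' : (p.1 : ℝ) ≤ p'.1 := Int.cast_le.mpr hle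
  have hq' : (0 : ℝ) < p'.1 := hq.trans_le hqq'
  refine lt_of_pow_lt_pow_left₀ (n + 1) (by positivity) ?_
  calc (p.1 * ‖approxResidual ξ p'‖) ^ (n + 1)
      = p.1 ^ n * (‖approxResidual ξ p'‖ ^ (n + 1) * p.1) := by ring
    _ < p.1 ^ n * (‖approxResidual ξ p‖ ^ (n + 1) * p'.1) :=
        mul_lt_mul_of_pos_left ((div_lt_div_iff₀ hq' hq).mp hw) (pow_pos hq n)
    _ ≤ p'.1 ^ n * (‖approxResidual ξ p‖ ^ (n + 1) * p'.1) := by gcongr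
    _ = (p'.1 * ‖approxResidual ξ p‖) ^ (n + 1) := by ring

theorem smul_sub_smul_ne_zero_of_approxWeight_lt (hs : s ≠ 0) {ξ : EuclideanSpace ℝ (Fin d)}
    {p p' : ℤ × (Fin d → ℤ)} (hp : 0 < p.1) (hle : p.1 ≤ p'.1)
    (hw : approxWeight s ξ p' < approxWeight s ξ p) : p'.1 • p.2 - p.1 • p'.2 ≠ 0 := by
  intro h
  have heq : (p.1 : ℝ) • approxResidual ξ p' = (p'.1 : ℝ) • approxResidual ξ p := by
    rw [← sub_eq_zero, ← toLp_smul_sub_smul, h]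
    ext i
    simp
  refine (fst_mul_norm_approxResidual_lt hs hp hle hw).ne ?_
  simpa [norm_smul, abs_of_pos, hp, hp.trans_le hle] using congrArg norm heq

theorem norm_toLp_smul_sub_smul_lt_of_approxWeight_lt (hs : s ≠ 0)
    {ξ : EuclideanSpace ℝ (Fin d)} {p p' : ℤ × (Fin d → ℤ)} (hp : 0 < p.1) (hle : p.1 ≤ p'.1)
    (hw : approxWeight s ξ p' < approxWeight s ξ p) :
    ‖WithLp.toLp 2 (fun i => (((p'.1 • p.2 - p.1 • p'.2) i : ℤ) : ℝ))‖ <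
      2 * (p'.1 * ‖approxResidual ξ p‖) :=
  calc ‖WithLp.toLp 2 (fun i => (((p'.1 • p.2 - p.1 • p'.2) i : ℤ) : ℝ))‖
      ≤ ‖(p.1 : ℝ) • approxResidual ξ p'‖ + ‖(p'.1 : ℝ) • approxResidual ξ p‖ := by
        rw [toLp_smul_sub_smul]
        exact norm_sub_le _ _
    _ = p.1 * ‖approxResidual ξ p'‖ + p'.1 * ‖approxResidual ξ p‖ := by
        simp [norm_smul, abs_of_pos, hp, hp.trans_le hle]
    _ < 2 * (p'.1 * ‖approxResidual ξ p‖) := by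
        linarith [fst_mul_norm_approxResidual_lt hs hp hle hw]

theorem one_div_lt_pow_mul_approxWeight (hs : s ≠ 0) {f : MvPolynomial (Fin d) ℚ}
    (hf : f.IsHomogeneous s) (hani : ∀ x : Fin d → ℚ, x ≠ 0 → eval x f ≠ 0)
    {ξ : EuclideanSpace ℝ (Fin d)} {p p' : ℤ × (Fin d → ℤ)} (hp : p ∈ surfaceVectors f)
    (hp' : p' ∈ surfaceVectors f) (hle : p.1 ≤ p'.1)
    (hw : approxWeight s ξ p' < approxWeight s ξ p) :
    1 / (2 ^ s * coeffDenom f * sphereSup f) < (p'.1 : ℝ) ^ (s - 1) * approxWeight s ξ p := by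
  have hq : (0 : ℝ) < p.1 := Int.cast_pos.mpr hp.1
  have hq' : (0 : ℝ) < p'.1 := Int.cast_pos.mpr hp'.1
  have hsep := mul_le_coeffDenom_mul_sphereSup_mul_norm_pow hs hf hani hp hp'
    (smul_sub_smul_ne_zero_of_approxWeight_lt hs hp.1 hle hw)
  have hclose := norm_toLp_smul_sub_smul_lt_of_approxWeight_lt hs hp.1 hle hw
  have hDK : 0 < coeffDenom f * sphereSup f :=
    pos_of_mul_pos_left ((mul_pos hq hq').trans_le hsep) (by positivity)
  rw [div_lt_iff₀ (by rw [mul_assoc]; positivity)]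
  refine lt_of_mul_lt_mul_left (a := (p.1 * p'.1 : ℝ)) ?_ (by positivity)
  calc (p.1 * p'.1 : ℝ) * 1 ≤ _ := (mul_one _).trans_le hsep
    _ < coeffDenom f * sphereSup f * (2 * (p'.1 * ‖approxResidual ξ p‖)) ^ s := by gcongr
    _ = p.1 * p'.1 * (p'.1 ^ (s - 1) * approxWeight s ξ p *
          (2 ^ s * coeffDenom f * sphereSup f)) := by
        rw [mul_pow, mul_pow, ← mul_pow_sub_one hs (p'.1 : ℝ), approxWeight]
        field_simp

end Weight

theorem exists_forall_le_of_finite_sublevel {α β : Type*} [LinearOrder β] {S : Set α} {g : α → β}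
    (hS : S.Nonempty) (hfin : ∀ b, {a ∈ S | g a ≤ b}.Finite) : ∃ a ∈ S, ∀ b ∈ S, g a ≤ g b := by
  obtain ⟨a₀, ha₀⟩ := hS
  obtain ⟨a, ⟨haS, ha⟩, hmin⟩ := Set.exists_min_image _ g (hfin (g a₀)) ⟨a₀, ha₀, le_rfl⟩
  refine ⟨a, haS, fun b hb => ?_⟩
  rcases le_total (g b) (g a₀) with h | h
  · exact hmin b ⟨hb, h⟩
  · exact ha.trans h

theorem exists_forall_le_mul_of_gap {ι : Type*} {height weight : ι → ℝ} {φ : ℝ → ℝ} {c : ℝ}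
    (hφ : Continuous φ) (hφ_top : Tendsto φ atTop atTop) (hpos : ∀ i, 0 < weight i)
    (hfin : ∀ T B, {i | height i ≤ T ∧ weight i ≤ B}.Finite)
    (hgap : ∀ i j, height i < height j → weight j < weight i → c < φ (height j) * weight i)
    (T₀ : ℝ) : ∃ T, T₀ ≤ T ∧ ∀ i, height i ≤ T → c ≤ φ T * weight i := by
  obtain ⟨T₁, hT₁⟩ :=
    eventually_atTop.mp ((eventually_ge_atTop T₀).and (hφ_top.eventually_ge_atTop 0))
  obtain hnone | hsome := {i | height i ≤ T₁}.eq_empty_or_nonempty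
  · exact ⟨T₁, (hT₁ T₁ le_rfl).1, fun i hi => (Set.eq_empty_iff_forall_notMem.mp hnone i hi).elim⟩
  obtain ⟨i, hi, hi_min⟩ := exists_forall_le_of_finite_sublevel hsome (hfin T₁)
  suffices h : ∃ T ≥ T₁, c ≤ φ T * weight i ∧ ∀ j, height j ≤ T → weight i ≤ weight j by
    obtain ⟨T, hT, hc, hmin⟩ := h
    exact ⟨T, (hT₁ T hT).1, fun j hj =>
      hc.trans (mul_le_mul_of_nonneg_left (hmin j hj) (hT₁ T hT).2)⟩
  obtain hnever | hbetter := {j | weight j < weight i}.eq_empty_or_nonempty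
  · obtain ⟨T, hT, hc⟩ := ((eventually_ge_atTop T₁).and
      ((hφ_top.atTop_mul_const (hpos i)).eventually_ge_atTop c)).exists
    exact ⟨T, hT, hc, fun j _ => not_lt.mp (Set.eq_empty_iff_forall_notMem.mp hnever j)⟩
  obtain ⟨j, hj, hj_min⟩ := exists_forall_le_of_finite_sublevel hbetter fun T =>
    (hfin T (weight i)).subset fun k hk => ⟨hk.2, (show weight k < weight i from hk.1).le⟩
  have hT₁j : T₁ < height j := not_le.mp fun h => hj.not_ge (hi_min j h)
  have hcj : ∀ᶠ T in nhds (height j), c < φ T * weight i :=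
    ((hφ.mul_const (weight i)).tendsto _).eventually_const_lt (hgap i j (hi.trans_lt hT₁j) hj)
  obtain ⟨T, ⟨hT₁T, hTj⟩, hc⟩ :=
    (Eventually.and (Ioo_mem_nhdsLT hT₁j) (hcj.filter_mono nhdsWithin_le_nhds)).exists
  exact ⟨T, hT₁T.le, hc.le, fun k hk => not_lt.mp fun h => (hk.trans_lt hTj).not_ge (hj_min k h)⟩

theorem intrinsic_uniform_lower_bound_hypersurface_general {d s : ℕ} (hs : 2 ≤ s)
    {f : MvPolynomial (Fin d) ℚ} (hhom : f.IsHomogeneous s)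
    (hfin : {x : Fin d → ℚ | eval x f = 0}.Finite) {ξ : EuclideanSpace ℝ (Fin d)}
    (hirr : ¬ ∃ x : Fin d → ℚ, ∀ i, (x i : ℝ) = ξ i) (T₀ : ℝ) :
    ∃ T : ℝ, T₀ ≤ T ∧
      ((1 / (2 ^ s * (coeffDenom f : ℝ) * sphereSup f) : ℝ) : EReal) ≤
        ((T ^ (s - 1) : ℝ) : EReal) * PsiSurface f s ξ T := by
  have hs0 : s ≠ 0 := by omega
  have hani (x : Fin d → ℚ) (hx : x ≠ 0) : eval x f ≠ 0 :=
    eval_ne_zero_of_isHomogeneous_of_finite_zeros hhom hfin hx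
  obtain ⟨T, hT, hle⟩ := exists_forall_le_mul_of_gap
    (height := fun p : surfaceVectors f => (p.1.1 : ℝ))
    (weight := fun p => approxWeight s ξ p.1) (φ := fun T => T ^ (s - 1))
    (continuous_pow _) (tendsto_pow_atTop (by omega)) (fun p => approxWeight_pos hirr p.2.1)
    (fun T B => .subset ((finite_approxWeight_le hs0 ξ T B).preimage Subtype.val_injective.injOn)
      fun p hp => ⟨p.2.1, hp⟩)
    (fun p p' hlt => one_div_lt_pow_mul_approxWeight hs0 hhom hani p.2 p'.2 (Int.cast_lt.mp hlt).le)
    (max 1 T₀)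
  have hT_pos : 0 < T := one_pos.trans_le ((le_max_left _ _).trans hT)
  exact ⟨T, (le_max_right _ _).trans hT,
    le_mul_PsiSurface (pow_pos hT_pos _) fun p hp hpT => hle ⟨p, hp⟩ hpT⟩

theorem intrinsic_uniform_lower_bound_hypersurface
    (d s : ℕ) (hs : 2 ≤ s)
    (f : MvPolynomial (Fin d) ℚ) (hhom : f.IsHomogeneous s)
    (hfin : {x : Fin d → ℚ | MvPolynomial.eval x f = 0}.Finite)
    (ξ : EuclideanSpace ℝ (Fin d))
    (hirr : ¬ ∃ x : Fin d → ℚ, ∀ i, (x i : ℝ) = ξ i)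
    (hsurf : MvPolynomial.aeval (fun i => ξ i) f = (1 : ℝ))
    (ε : ℝ) (hε : 0 < ε) (T₀ : ℝ) :
    ∃ T : ℝ, T₀ ≤ T ∧
      ((1 / (2 ^ s * (coeffDenom f : ℝ) * sphereSup f) - ε : ℝ) : EReal) ≤
        ((T ^ (s - 1) : ℝ) : EReal) * PsiSurface f s ξ T := by
  obtain ⟨T, hT, hle⟩ := intrinsic_uniform_lower_bound_hypersurface_general hs hhom hfin hirr T₀
  exact ⟨T, hT, le_trans (EReal.coe_le_coe_iff.mpr (sub_le_self _ hε.le)) hle⟩
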